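/- arXiv:1407.0615 — 2 statements merged into one kernel-verified Lean document; each statement's English description precedes it below -/
import Mathlib

section
/- Let ν be a real number with ν ≥ 1, and let 0 < a < b be two consecutive positive zeroes of J_{ν−1} (i.e. J_{ν−1}(a) = J_{ν−1}(b) = 0 and J_{ν−1}(z) ≠ 0 for all z with a < z < b). Then there exists exactly one z in the open interval (a, b) with J_{ν−1}(z) + J_ν(z) = 0. Conversely, if 0 < a < b are two consecutive positive zeroes of z ↦ J_{ν−1}(z) + J_ν(z), then there exists exactly one z in (a, b) with J_{ν−1}(z) = 0. -/
/-- Bessel function of the first kind of real order `ν`, defined via its power series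
`J_ν(z) = ∑ₘ (−1)^m / (m! Γ(ν+m+1)) (z/2)^(ν+2m)` (with real-exponent powers). -/
noncomputable def besselJ (ν z : ℝ) : ℝ :=
  ∑' m : ℕ, ((-1 : ℝ) ^ m / (Nat.factorial m * Real.Gamma (ν + m + 1))) *
    (z / 2) ^ (ν + 2 * (m : ℝ))

/-- `x` (indexed by `k ≥ 1`) enumerates the positive zeroes of `f`: it is strictly
increasing on indices `k ≥ 1`, each `x k` is a positive zero of `f`, and every positive
zero of `f` is some `x k`. -/
def EnumPosZeros (f : ℝ → ℝ) (x : ℕ → ℝ) : Prop :=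
  StrictMonoOn x (Set.Ici 1) ∧ (∀ k, 1 ≤ k → 0 < x k ∧ f (x k) = 0) ∧
    ∀ z : ℝ, 0 < z → f z = 0 → ∃ k, 1 ≤ k ∧ x k = z

open Filter Topology Set

lemma aux_right {p : ℝ → ℝ} {a b p' : ℝ} (hab : a < b) (h : HasDerivAt p p' a) (ha : p a = 0)
    (hp : ∀ z, a < z → z < b → 0 ≤ p z) : 0 ≤ p' := by
  have h1 := (hasDerivAt_iff_tendsto_slope.1 h).mono_left
    (nhdsWithin_mono a (fun x (hx : x ∈ Ioi a) => ne_of_gt hx))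
  refine ge_of_tendsto h1 ?_
  filter_upwards [Ioo_mem_nhdsGT hab] with z hz
  rw [slope_def_field, ha]
  have := hp z hz.1 hz.2
  have := hz.1
  exact div_nonneg (by linarith) (by linarith)

lemma aux_left {p : ℝ → ℝ} {a b p' : ℝ} (hab : a < b) (h : HasDerivAt p p' b) (hb : p b = 0)
    (hp : ∀ z, a < z → z < b → 0 ≤ p z) : p' ≤ 0 := by
  have h1 := (hasDerivAt_iff_tendsto_slope.1 h).mono_left
    (nhdsWithin_mono b (fun x (hx : x ∈ Iio b) => ne_of_lt hx))
  refine le_of_tendsto h1 ?_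
  filter_upwards [Ioo_mem_nhdsLT hab] with z hz
  rw [slope_def_field, hb]
  have := hp z hz.1 hz.2
  have := hz.2
  exact div_nonpos_of_nonneg_of_nonpos (by linarith) (by linarith)

lemma aux_pos {p q p' q' : ℝ → ℝ} {a b : ℝ} (hab : a < b)
    (hp : ∀ z ∈ Icc a b, HasDerivAt p (p' z) z) (hq : ∀ z ∈ Icc a b, HasDerivAt q (q' z) z)
    (ha : p a = 0) (hb : p b = 0)
    (h1 : ∀ z ∈ Icc a b, p z = 0 → ∃ c > 0, p' z = -c * q z)
    (h2 : ∀ z ∈ Icc a b, q z = 0 → ∃ c > 0, q' z = c * p z)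
    (h3 : ∀ z ∈ Icc a b, p z = 0 → q z ≠ 0)
    (hpos : ∀ z, a < z → z < b → 0 < p z) :
    ∃! z : ℝ, z ∈ Ioo a b ∧ q z = 0 := by
  have hma : a ∈ Icc a b := ⟨le_rfl, hab.le⟩
  have hmb : b ∈ Icc a b := ⟨hab.le, le_rfl⟩
  have qa : q a < 0 := by
    have h := aux_right hab (hp a hma) ha (fun z h h' => (hpos z h h').le)
    obtain ⟨c, hc, e⟩ := h1 a hma ha
    refine lt_of_le_of_ne ?_ (h3 a hma ha)
    by_contra! hh
    nlinarith [mul_pos hc hh]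
  have qb : 0 < q b := by
    have h := aux_left hab (hp b hmb) hb (fun z h h' => (hpos z h h').le)
    obtain ⟨c, hc, e⟩ := h1 b hmb hb
    refine lt_of_le_of_ne ?_ (h3 b hmb hb).symm
    by_contra! hh
    nlinarith [mul_pos_of_neg_of_neg (neg_neg_of_pos hc) hh]
  have key : ∀ x y, a < x → x < y → y < b → q x = 0 → q y = 0 → False := by
    intro x y hax hxy hyb hx hy
    have hd : ∀ z, x ≤ z → z ≤ y → q z = 0 → 0 < q' z := by
      intro z hz hz' e
      obtain ⟨c, hc, e'⟩ := h2 z ⟨by linarith, by linarith⟩ e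
      rw [e']
      exact mul_pos hc (hpos z (by linarith) (by linarith))
    have hq' : ∀ z, x ≤ z → z ≤ y → HasDerivAt q (q' z) z := fun z hz hz' =>
      hq z ⟨by linarith, by linarith⟩
    have hnn : ∀ z ∈ Icc x y, -q z ≤ 0 := by
      intro z hz
      refine image_le_of_deriv_right_lt_deriv_boundary (f := fun z => -q z) (f' := fun z => -q' z)
        (B := fun _ => 0) (B' := fun _ => 0) ?_ ?_ ?_ ?_ ?_ hz
      · intro w hw
        exact (hq' w hw.1 hw.2).neg.continuousAt.continuousWithinAt
      · intro w hw
        exact (hq' w hw.1 hw.2.le).neg.hasDerivWithinAt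
      · simp [hx]
      · intro w
        exact hasDerivAt_const w 0
      · intro w hw e
        have := hd w hw.1 hw.2.le (by simpa using e)
        simpa using this
    have := aux_left hxy (hq' y hxy.le le_rfl) hy
      (fun z h h' => by have := hnn z ⟨h.le, h'.le⟩; linarith)
    have := hd y hxy.le le_rfl hy
    linarith
  have hcont : ContinuousOn q (Icc a b) := fun z hz => (hq z hz).continuousAt.continuousWithinAt
  obtain ⟨z, hz, e⟩ := intermediate_value_Ioo hab.le hcont ⟨qa, qb⟩
  refine ⟨z, ⟨hz, e⟩, ?_⟩
  rintro w ⟨hw, e'⟩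
  rcases lt_trichotomy w z with h | h | h
  · exact (key w z hw.1 h hz.2 e' e).elim
  · exact h
  · exact (key z w hz.1 h hw.2 e e').elim

lemma aux_main {p q p' q' : ℝ → ℝ} {a b : ℝ} (hab : a < b)
    (hp : ∀ z ∈ Icc a b, HasDerivAt p (p' z) z) (hq : ∀ z ∈ Icc a b, HasDerivAt q (q' z) z)
    (ha : p a = 0) (hb : p b = 0)
    (h1 : ∀ z ∈ Icc a b, p z = 0 → ∃ c > 0, p' z = -c * q z)
    (h2 : ∀ z ∈ Icc a b, q z = 0 → ∃ c > 0, q' z = c * p z)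
    (h3 : ∀ z ∈ Icc a b, p z = 0 → q z ≠ 0)
    (hne : ∀ z, a < z → z < b → p z ≠ 0) :
    ∃! z : ℝ, z ∈ Ioo a b ∧ q z = 0 := by
  have hcont : ContinuousOn p (Icc a b) := fun z hz => (hp z hz).continuousAt.continuousWithinAt
  have hs : (∀ z, a < z → z < b → 0 < p z) ∨ (∀ z, a < z → z < b → 0 < - p z) := by
    by_contra! hh
    obtain ⟨⟨x, hx, hx', hpx⟩, ⟨y, hy, hy', hpy⟩⟩ := hh
    have hsub : uIcc x y ⊆ Icc a b := by
      intro w hw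
      rw [mem_uIcc] at hw
      constructor <;> rcases hw with h | h <;> linarith [h.1, h.2]
    obtain ⟨w, hw, e⟩ := intermediate_value_uIcc (hcont.mono hsub)
      (show (0:ℝ) ∈ uIcc (p x) (p y) from by rw [mem_uIcc]; left; exact ⟨hpx, by linarith⟩)
    rw [mem_uIcc] at hw
    refine hne w ?_ ?_ e <;> rcases hw with h | h <;> linarith [h.1, h.2]
  rcases hs with hs | hs
  · exact aux_pos hab hp hq ha hb h1 h2 h3 hs
  · have := aux_pos (p := fun z => -p z) (q := fun z => -q z) (p' := fun z => -p' z)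
      (q' := fun z => -q' z) hab (fun z hz => (hp z hz).neg) (fun z hz => (hq z hz).neg)
      (by simp [ha]) (by simp [hb])
      (fun z hz e => by
        obtain ⟨c, hc, e'⟩ := h1 z hz (by simpa using e)
        exact ⟨c, hc, by simp only [e']; ring⟩)
      (fun z hz e => by
        obtain ⟨c, hc, e'⟩ := h2 z hz (by simpa using e)
        exact ⟨c, hc, by simp only [e']; ring⟩)
      (fun z hz e => by simpa using h3 z hz (by simpa using e)) hs
    simpa using this

/-- Coefficients. -/
noncomputable def bc (ν : ℝ) (m : ℕ) : ℝ := (-1 : ℝ) ^ m / (Nat.factorial m * Real.Gamma (ν + m + 1))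

/-- Entire part. -/
noncomputable def bF (ν x : ℝ) : ℝ := ∑' m : ℕ, bc ν m * x ^ m

lemma gamma_lower {ν : ℝ} (hν : 0 ≤ ν) (m : ℕ) : Real.Gamma (ν + 1) ≤ Real.Gamma (ν + m + 1) := by
  induction m with
  | zero => simp
  | succ k ih =>
    refine ih.trans ?_
    have hk : (0:ℝ) ≤ k := k.cast_nonneg
    have h : ν + k + 1 ≠ 0 := by positivity
    have e : ν + ((k + 1 : ℕ) : ℝ) + 1 = (ν + k + 1) + 1 := by push_cast; ring
    rw [e, Real.Gamma_add_one h]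
    have : 0 < Real.Gamma (ν + k + 1) := Real.Gamma_pos_of_pos (by positivity)
    nlinarith

lemma bc_abs {ν : ℝ} (hν : 0 ≤ ν) (m : ℕ) :
    |bc ν m| ≤ (1 / Real.Gamma (ν + 1)) * (1 / (m.factorial : ℝ)) := by
  have h0 : 0 < Real.Gamma (ν + 1) := Real.Gamma_pos_of_pos (by positivity)
  have h1 : 0 < Real.Gamma (ν + m + 1) := Real.Gamma_pos_of_pos (by positivity)
  have h2 : (0:ℝ) < m.factorial := by positivity
  unfold bc
  rw [abs_div, abs_pow, abs_neg, abs_one, one_pow, abs_of_pos (by positivity), ← one_div_mul_one_div,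
    mul_comm]
  gcongr
  exact gamma_lower hν m

lemma bF_summable {ν : ℝ} (hν : 0 ≤ ν) (x : ℝ) : Summable fun m : ℕ => bc ν m * x ^ m := by
  refine Summable.of_norm_bounded
    ((Real.summable_pow_div_factorial |x|).mul_left (1 / Real.Gamma (ν + 1))) (fun m => ?_)
  rw [Real.norm_eq_abs, abs_mul, abs_pow]
  refine (mul_le_mul_of_nonneg_right (bc_abs hν m) (by positivity)).trans (le_of_eq ?_)
  ring

lemma bc_succ (ν : ℝ) (m : ℕ) : bc ν (m + 1) * (m + 1 : ℕ) = - bc (ν + 1) m := by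
  unfold bc
  have e : ν + ((m + 1 : ℕ) : ℝ) + 1 = ν + 1 + m + 1 := by push_cast; ring
  rw [e, Nat.factorial_succ, pow_succ]
  have : ((m + 1 : ℕ) : ℝ) ≠ 0 := by positivity
  push_cast at this ⊢
  rw [div_mul_eq_mul_div, mul_assoc ((m:ℝ) + 1), mul_comm _ ((m:ℝ)+1), mul_div_mul_left _ _ this]
  ring

lemma bF_deriv {ν : ℝ} (hν : 0 ≤ ν) (x : ℝ) : HasDerivAt (bF ν) (- bF (ν + 1) x) x := by
  set R := |x| + 1
  have hR : 0 < R := by positivity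
  have hsum : Summable fun m : ℕ => (1 / Real.Gamma (ν + 1)) * ((m : ℝ) * R ^ (m - 1) / m.factorial) := by
    refine Summable.mul_left _ ?_
    rw [← summable_nat_add_iff 1]
    refine (Real.summable_pow_div_factorial R).congr (fun m => ?_)
    rw [Nat.factorial_succ]
    push_cast
    rw [mul_div_mul_left _ _ (by positivity)]
  have h := hasDerivAt_tsum_of_isPreconnected (g := fun m x => bc ν m * x ^ m)
    (g' := fun m x => bc ν m * (m * x ^ (m - 1))) (t := Ioo (-R) R) (y₀ := x) (y := x) hsum isOpen_Ioo
    isPreconnected_Ioo (fun m y _ => (hasDerivAt_pow m y).const_mul _)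
    (fun m y hy => by
      rw [Real.norm_eq_abs, abs_mul, abs_mul, abs_pow, Nat.abs_cast]
      have hy' : |y| ≤ R := abs_le.2 ⟨hy.1.le, hy.2.le⟩
      calc _ ≤ ((1 / Real.Gamma (ν + 1)) * (1 / (m.factorial : ℝ))) * (m * R ^ (m - 1)) := by
            gcongr
            exact bc_abs hν m
        _ = _ := by ring)
    (abs_lt.1 (by simp [R])) (bF_summable hν x) (abs_lt.1 (by simp [R]))
  suffices e : - bF (ν + 1) x = ∑' m : ℕ, bc ν m * (m * x ^ (m - 1)) by
    rw [e]; exact h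
  have hs : Summable fun m : ℕ => bc ν m * (m * x ^ (m - 1)) := by
    rw [← summable_nat_add_iff 1]
    refine (bF_summable (ν := ν + 1) (by linarith) x).neg.congr (fun m => ?_)
    rw [← mul_assoc, bc_succ, Nat.add_sub_cancel]; ring
  rw [hs.tsum_eq_zero_add]
  simp only [Nat.cast_zero, zero_mul, mul_zero, zero_add]
  unfold bF
  rw [← tsum_neg]
  congr 1
  ext m
  rw [← mul_assoc, bc_succ, Nat.add_sub_cancel]; ring

lemma bF_rec {ν : ℝ} (hν : 0 ≤ ν) (x : ℝ) :
    bF ν x = (ν + 1) * bF (ν + 1) x - x * bF (ν + 1 + 1) x := by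
  have h1 := bF_summable (ν := ν + 1) (by linarith) x
  have h2 := bF_summable (ν := ν + 1 + 1) (by linarith) x
  have e1 : ∀ m : ℕ, bc ν m * x ^ m = (ν + 1) * (bc (ν + 1) m * x ^ m) + m * (bc (ν + 1) m * x ^ m) := by
    intro m
    have : bc ν m = (ν + 1 + m) * bc (ν + 1) m := by
      unfold bc
      have h : ν + m + 1 ≠ 0 := by positivity
      have e : ν + 1 + m + 1 = (ν + m + 1) + 1 := by ring
      rw [e, Real.Gamma_add_one h]
      have : Real.Gamma (ν + m + 1) ≠ 0 := (Real.Gamma_pos_of_pos (by positivity)).ne'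
      field_simp
      ring
    rw [this]; ring
  have e2 : ∀ m : ℕ, ((m + 1 : ℕ) : ℝ) * (bc (ν + 1) (m + 1) * x ^ (m + 1)) =
      - (x * (bc (ν + 1 + 1) m * x ^ m)) := by
    intro m
    have := bc_succ (ν + 1) m
    rw [pow_succ]
    linear_combination x ^ m * x * this
  have hs : Summable fun m : ℕ => (m : ℝ) * (bc (ν + 1) m * x ^ m) := by
    rw [← summable_nat_add_iff 1]
    exact (h2.mul_left x).neg.congr (fun m => (e2 m).symm)
  have : bF ν x = ∑' m : ℕ, ((ν + 1) * (bc (ν + 1) m * x ^ m) + m * (bc (ν + 1) m * x ^ m)) := by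
    unfold bF; congr 1; ext m; exact e1 m
  rw [this, (h1.mul_left _).tsum_add hs, hs.tsum_eq_zero_add, tsum_mul_left]
  simp_rw [e2]
  rw [tsum_neg, tsum_mul_left]
  simp [bF]; ring

lemma besselJ_eq (ν : ℝ) {z : ℝ} (hz : 0 < z) : besselJ ν z = (z / 2) ^ ν * bF ν ((z / 2) ^ 2) := by
  unfold besselJ bF
  rw [← tsum_mul_left]
  congr 1
  ext m
  rw [Real.rpow_add (by positivity), show (2 * (m:ℝ)) = ((2 * m : ℕ) : ℝ) by push_cast; rfl,
    Real.rpow_natCast, pow_mul, bc]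
  ring

lemma bessel_deriv {ν : ℝ} (hν : 0 ≤ ν) {z : ℝ} (hz : 0 < z) :
    HasDerivAt (besselJ ν) (ν / z * besselJ ν z - besselJ (ν + 1) z) z := by
  have hz2 : 0 < z / 2 := by positivity
  have hl : HasDerivAt (fun z : ℝ => z / 2) (1 / 2) z := (hasDerivAt_id z).div_const 2
  have h1 := hl.rpow_const (p := ν) (Or.inl hz2.ne')
  have h2 : HasDerivAt (fun z : ℝ => bF ν ((z / 2) ^ 2)) _ z :=
    HasDerivAt.comp (h₂ := bF ν) (h := fun z : ℝ => (z / 2) ^ 2) z (bF_deriv hν ((z / 2) ^ 2)) (hl.pow 2)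
  have h3 := (h1.mul h2).congr_of_eventuallyEq (f₁ := besselJ ν) (by
    filter_upwards [Ioi_mem_nhds hz] with w hw
    simpa using besselJ_eq ν hw)
  refine h3.congr_deriv ?_
  rw [besselJ_eq ν hz, besselJ_eq (ν + 1) hz, Real.rpow_add_one hz2.ne', Real.rpow_sub_one hz2.ne']
  field_simp
  ring

lemma bessel_rec {ν : ℝ} (hν : 0 ≤ ν) {z : ℝ} (hz : 0 < z) :
    besselJ (ν + 1 + 1) z = 2 * (ν + 1) / z * besselJ (ν + 1) z - besselJ ν z := by
  have hz2 : 0 < z / 2 := by positivity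
  rw [besselJ_eq ν hz, besselJ_eq (ν + 1) hz, besselJ_eq (ν + 1 + 1) hz, Real.rpow_add_one hz2.ne',
    Real.rpow_add_one hz2.ne', bF_rec hν]
  field_simp
  ring

lemma bessel_deriv' {ν : ℝ} (hν : 0 ≤ ν) {z : ℝ} (hz : 0 < z) :
    HasDerivAt (besselJ (ν + 1)) (besselJ ν z - (ν + 1) / z * besselJ (ν + 1) z) z := by
  refine (bessel_deriv (ν := ν + 1) (by linarith) hz).congr_deriv ?_
  rw [bessel_rec hν hz]
  ring

lemma bessel_ne {ν : ℝ} (hν : 0 ≤ ν) {z : ℝ} (hz : 0 < z) (h1 : besselJ ν z = 0)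
    (h2 : besselJ (ν + 1) z = 0) : False := by
  have hd : ∀ w : ℝ, 0 < w → HasDerivAt
      (fun w => w ^ (2 * (ν + 1)) * (besselJ ν w ^ 2 + besselJ (ν + 1) w ^ 2))
      (w ^ (2 * (ν + 1)) / w * (2 * (2 * ν + 1) * besselJ ν w ^ 2)) w := by
    intro w hw
    have h := (Real.hasDerivAt_rpow_const (p := 2 * (ν + 1)) (Or.inl hw.ne')).mul
      (((bessel_deriv hν hw).pow 2).add ((bessel_deriv' hν hw).pow 2))
    refine HasDerivAt.congr_deriv h ?_
    rw [Real.rpow_sub_one hw.ne']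
    simp only [Pi.add_apply, Pi.pow_apply]
    field_simp
    ring
  have hmono : MonotoneOn
      (fun w => w ^ (2 * (ν + 1)) * (besselJ ν w ^ 2 + besselJ (ν + 1) w ^ 2)) (Ioi 0) := by
    refine monotoneOn_of_deriv_nonneg (convex_Ioi 0)
      (fun w hw => (hd w hw).continuousAt.continuousWithinAt) ?_ ?_
    · intro w hw
      rw [interior_Ioi] at hw
      exact (hd w hw).differentiableAt.differentiableWithinAt
    · intro w hw
      rw [interior_Ioi] at hw
      rw [(hd w hw).deriv]
      have : (0:ℝ) < w := hw
      positivity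
  have hzero : ∀ w, 0 < w → w < z → besselJ ν w = 0 := by
    intro w hw hwz
    have h := hmono hw hz hwz.le
    simp only [h1, h2] at h
    have hp : 0 < w ^ (2 * (ν + 1)) := Real.rpow_pos_of_pos hw _
    by_contra hne
    have : 0 < besselJ ν w ^ 2 + besselJ (ν + 1) w ^ 2 := by positivity
    have := mul_pos hp this
    norm_num at h
    linarith
  have hF0 : bF ν 0 = 1 / Real.Gamma (ν + 1) := by
    unfold bF
    rw [tsum_eq_single 0]
    · simp [bc]
    · intro m hm
      simp [hm]
  have hc : ContinuousAt (fun w : ℝ => bF ν ((w / 2) ^ 2)) 0 := by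
    refine ContinuousAt.comp (g := bF ν) (bF_deriv hν _).continuousAt ?_
    fun_prop
  have ht : Tendsto (fun w : ℝ => bF ν ((w / 2) ^ 2)) (𝓝[>] 0) (𝓝 (bF ν ((0 / 2) ^ 2))) :=
    hc.tendsto.mono_left nhdsWithin_le_nhds
  have ht' : Tendsto (fun w : ℝ => bF ν ((w / 2) ^ 2)) (𝓝[>] 0) (𝓝 0) := by
    refine tendsto_const_nhds.congr' ?_
    filter_upwards [Ioo_mem_nhdsGT hz] with w hw
    have h := hzero w hw.1 hw.2
    rw [besselJ_eq ν hw.1] at h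
    have hp : 0 < (w / 2) ^ ν := Real.rpow_pos_of_pos (by linarith [hw.1]) _
    rcases mul_eq_zero.1 h with h | h
    · exact absurd h hp.ne'
    · exact h.symm
  have e := tendsto_nhds_unique ht ht'
  norm_num at e
  rw [hF0] at e
  have : 0 < Real.Gamma (ν + 1) := Real.Gamma_pos_of_pos (by positivity)
  have := one_div_pos.2 this
  linarith

/-- For `ν ≥ 1`, between two consecutive positive zeroes of `J_{ν−1}` there is
exactly one zero of `J_{ν−1} + J_ν`, and conversely. -/
theorem stmt10 (ν : ℝ) (hν : 1 ≤ ν) :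
    (∀ a b : ℝ, 0 < a → a < b → besselJ (ν - 1) a = 0 → besselJ (ν - 1) b = 0 →
      (∀ z : ℝ, a < z → z < b → besselJ (ν - 1) z ≠ 0) →
      ∃! z : ℝ, z ∈ Set.Ioo a b ∧ besselJ (ν - 1) z + besselJ ν z = 0) ∧
    (∀ a b : ℝ, 0 < a → a < b →
      besselJ (ν - 1) a + besselJ ν a = 0 → besselJ (ν - 1) b + besselJ ν b = 0 →
      (∀ z : ℝ, a < z → z < b → besselJ (ν - 1) z + besselJ ν z ≠ 0) →
      ∃! z : ℝ, z ∈ Set.Ioo a b ∧ besselJ (ν - 1) z = 0) := by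
  obtain ⟨μ, rfl⟩ : ∃ μ, ν = μ + 1 := ⟨ν - 1, by ring⟩
  have hμ : 0 ≤ μ := by linarith
  rw [add_sub_cancel_right]
  have hf := fun (z : ℝ) (hz : 0 < z) => bessel_deriv hμ hz
  have hh := fun (z : ℝ) (hz : 0 < z) => (bessel_deriv hμ hz).add (bessel_deriv' hμ hz)
  constructor
  · intro a b ha hab h0 h1 hne
    refine aux_main (p := besselJ μ) (q := fun z => besselJ μ z + besselJ (μ + 1) z) hab
      (fun z hz => hf z (ha.trans_le hz.1)) (fun z hz => hh z (ha.trans_le hz.1)) h0 h1 ?_ ?_ ?_ hne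
    · intro z hz e
      refine ⟨1, one_pos, ?_⟩
      simp only [e]; ring
    · intro z hz e
      have hz0 := ha.trans_le hz.1
      refine ⟨2 + (2 * μ + 1) / z, by positivity, ?_⟩
      have e' : besselJ (μ + 1) z = - besselJ μ z := by linarith
      rw [e']; ring
    · intro z hz e e'
      exact bessel_ne hμ (ha.trans_le hz.1) e (by simpa [e] using e')
  · intro a b ha hab h0 h1 hne
    have := aux_main (p := fun z => besselJ μ z + besselJ (μ + 1) z) (q := fun z => - besselJ μ z) hab
      (fun z hz => hh z (ha.trans_le hz.1)) (fun z hz => (hf z (ha.trans_le hz.1)).neg) h0 h1 ?_ ?_ ?_ hne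
    · simpa using this
    · intro z hz e
      have hz0 := ha.trans_le hz.1
      refine ⟨2 + (2 * μ + 1) / z, by positivity, ?_⟩
      have e' : besselJ (μ + 1) z = - besselJ μ z := by linarith
      rw [e']; ring
    · intro z hz e
      refine ⟨1, one_pos, ?_⟩
      have e : besselJ μ z = 0 := by simpa using e
      simp only [e]; ring
    · intro z hz e e'
      have e' : besselJ μ z = 0 := by simpa using e'
      exact bessel_ne hμ (ha.trans_le hz.1) e' (by simpa [e'] using e)
end

section
/- Let ν be a real number with ν ≥ 1. The function z ↦ J_{ν−1}(z) + J_ν(z) has exactly one zero in the open interval (0, j_{ν,1}), namely its first positive zero λ⁺_{ν−1,1}, and this zero satisfies j′_{ν,1} < λ⁺_{ν−1,1} < j_{ν,1}. -/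
noncomputable def bC (ν : ℝ) (m : ℕ) : ℝ := (-1 : ℝ) ^ m / (Nat.factorial m * Real.Gamma (ν + m + 1))

noncomputable def bP (ν t : ℝ) : ℝ := ∑' m : ℕ, bC ν m * t ^ m

lemma gamma_lb (ν : ℝ) (hν : 0 ≤ ν) (m : ℕ) : Real.Gamma (ν + 1) ≤ Real.Gamma (ν + m + 1) := by
  induction m with
  | zero => simp
  | succ k ih =>
    have h1 : (0 : ℝ) ≤ k := Nat.cast_nonneg k
    have h : Real.Gamma (ν + (k + 1 : ℕ) + 1) = (ν + k + 1) * Real.Gamma (ν + k + 1) := by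
      rw [← Real.Gamma_add_one (by positivity)]
      push_cast
      ring_nf
    rw [h]
    have h2 : 0 < Real.Gamma (ν + k + 1) := Real.Gamma_pos_of_pos (by positivity)
    nlinarith [mul_nonneg (add_nonneg hν h1) h2.le]

lemma bC_abs (ν : ℝ) (hν : 0 ≤ ν) (m : ℕ) :
    |bC ν m| ≤ (1 / Real.Gamma (ν + 1)) * (1 / (Nat.factorial m : ℝ)) := by
  have h2 : 0 < Real.Gamma (ν + 1) := Real.Gamma_pos_of_pos (by positivity)
  have h3 := gamma_lb ν hν m
  have h4 : (0 : ℝ) < Nat.factorial m := by positivity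
  unfold bC
  rw [abs_div, abs_pow, abs_neg, abs_one, one_pow, abs_mul, abs_of_pos h4,
    abs_of_pos (lt_of_lt_of_le h2 h3), div_mul_div_comm, one_mul, mul_comm (Real.Gamma _)]
  gcongr

lemma bP_summable (ν : ℝ) (hν : 0 ≤ ν) (t : ℝ) : Summable fun m => bC ν m * t ^ m := by
  refine Summable.of_norm_bounded
    ((Real.summable_pow_div_factorial |t|).mul_left (1 / Real.Gamma (ν + 1))) fun m => ?_
  rw [Real.norm_eq_abs, abs_mul, abs_pow]
  have := mul_le_mul_of_nonneg_right (bC_abs ν hν m) (pow_nonneg (abs_nonneg t) m)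
  refine this.trans (le_of_eq ?_)
  ring

lemma bC_succ (ν : ℝ) (m : ℕ) : ((m + 1 : ℕ) : ℝ) * bC ν (m + 1) = - bC (ν + 1) m := by
  unfold bC
  have h : ν + ((m + 1 : ℕ) : ℝ) + 1 = ν + 1 + m + 1 := by push_cast; ring
  rw [h, Nat.factorial_succ, pow_succ]
  have h4 : ((m : ℝ) + 1) ≠ 0 := by positivity
  push_cast
  rw [mul_div_assoc', mul_assoc ((m : ℝ) + 1), mul_div_mul_left _ _ h4]
  ring

lemma bP_deriv_tsum (ν : ℝ) (t : ℝ) (hν : 0 ≤ ν) :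
    ∑' m : ℕ, bC ν m * ((m : ℝ) * t ^ (m - 1)) = - bP (ν + 1) t := by
  have e : ∀ m : ℕ, bC ν (m + 1) * (((m + 1 : ℕ) : ℝ) * t ^ (m + 1 - 1))
      = - (bC (ν + 1) m * t ^ m) := by
    intro m
    have := bC_succ ν m
    rw [Nat.add_sub_cancel]
    linear_combination t ^ m * this
  have hs : Summable fun m : ℕ => bC ν m * ((m : ℝ) * t ^ (m - 1)) := by
    rw [← summable_nat_add_iff 1]
    simp_rw [e]
    exact (bP_summable (ν + 1) (by positivity) t).neg
  rw [hs.tsum_eq_zero_add]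
  simp_rw [e]
  rw [tsum_neg]
  simp [bP]

lemma bP_hasDerivAt (ν : ℝ) (hν : 0 ≤ ν) (t : ℝ) : HasDerivAt (bP ν) (- bP (ν + 1) t) t := by
  rw [← bP_deriv_tsum ν t hν]
  set R : ℝ := |t| + 1 with hR
  have hR0 : 0 < R := by positivity
  have hu : Summable fun m : ℕ => (1 / Real.Gamma (ν + 1)) * (1 / (Nat.factorial m : ℝ)) *
      ((m : ℝ) * R ^ (m - 1)) := by
    rw [← summable_nat_add_iff 1]
    refine ((Real.summable_pow_div_factorial R).mul_left (1 / Real.Gamma (ν + 1))).congr fun m => ?_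
    rw [Nat.add_sub_cancel, Nat.factorial_succ]
    push_cast
    have h4 : ((m : ℝ) + 1) ≠ 0 := by positivity
    have h5 : (Nat.factorial m : ℝ) ≠ 0 := by positivity
    field_simp
  refine hasDerivAt_tsum_of_isPreconnected (t := Metric.ball 0 R) (y₀ := 0) hu Metric.isOpen_ball
    (convex_ball (0 : ℝ) R).isPreconnected (g := fun m y => bC ν m * y ^ m) 
    (g' := fun m y => bC ν m * ((m : ℝ) * y ^ (m - 1))) ?_ ?_ ?_ ?_ ?_
  · intro m y _
    exact (hasDerivAt_pow m y).const_mul _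
  · intro m y hy
    rw [Real.norm_eq_abs, abs_mul, abs_mul, abs_pow, Nat.abs_cast]
    have hy' : |y| ≤ R := by
      have := mem_ball_zero_iff.1 hy
      rw [Real.norm_eq_abs] at this
      exact this.le
    have := bC_abs ν hν m
    gcongr
  · exact Metric.mem_ball_self hR0
  · exact bP_summable ν hν 0
  · rw [mem_ball_zero_iff, Real.norm_eq_abs, hR]; linarith

lemma bP_rec (ν : ℝ) (hν : 1 ≤ ν) (t : ℝ) : bP (ν - 1) t = ν * bP ν t - t * bP (ν + 1) t := by
  have h0 : 0 ≤ ν := by linarith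
  have e : ∀ m : ℕ, bC (ν - 1) m * t ^ m = ν * (bC ν m * t ^ m)
      + t * (bC ν m * ((m : ℝ) * t ^ (m - 1))) := by
    intro m
    have hp : t * ((m : ℝ) * t ^ (m - 1)) = m * t ^ m := by
      cases m with
      | zero => simp
      | succ k => rw [Nat.add_sub_cancel, pow_succ]; ring
    have hc : bC (ν - 1) m = (ν + m) * bC ν m := by
      unfold bC
      have hpos : (0 : ℝ) < ν + m := by positivity
      have : Real.Gamma (ν + m + 1) = (ν + m) * Real.Gamma (ν + m) := Real.Gamma_add_one hpos.ne'
      rw [this, show ν - 1 + m + 1 = ν + m by ring]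
      have h6 := (Real.Gamma_pos_of_pos hpos).ne'
      have h5 : (Nat.factorial m : ℝ) ≠ 0 := by positivity
      field_simp
    rw [hc]
    linear_combination (- bC ν m) * hp
  have hs2 : Summable fun m : ℕ => bC ν m * ((m : ℝ) * t ^ (m - 1)) := by
    rw [← summable_nat_add_iff 1]
    refine (bP_summable (ν + 1) (by positivity) t).neg.congr fun m => ?_
    have := bC_succ ν m
    rw [Nat.add_sub_cancel]
    linear_combination (- t ^ m) * this
  have h1 := bP_deriv_tsum ν t h0
  unfold bP at *
  simp_rw [e]
  rw [((bP_summable ν h0 t).mul_left ν).tsum_add (hs2.mul_left t), tsum_mul_left, tsum_mul_left, h1]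
  ring

lemma bP_zero (ν : ℝ) (hν : 0 ≤ ν) : 0 < bP ν 0 := by
  have h2 : 0 < Real.Gamma (ν + 1) := Real.Gamma_pos_of_pos (by positivity)
  have : bP ν 0 = bC ν 0 := by
    unfold bP
    rw [tsum_eq_single 0]
    · simp
    · intro m hm; simp [hm]
  rw [this]
  simp [bC, h2]

lemma bJ_eq (ν z : ℝ) (hz : 0 < z) : besselJ ν z = (z / 2) ^ ν * bP ν ((z / 2) ^ 2) := by
  unfold besselJ bP
  rw [← tsum_mul_left]
  refine tsum_congr fun m => ?_
  rw [Real.rpow_add (by positivity), ← pow_mul]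
  have : (z / 2) ^ (2 * (m : ℝ)) = (z / 2) ^ (2 * m) := by
    rw [← Real.rpow_natCast]; push_cast; rfl
  rw [this]
  unfold bC
  ring

lemma bJ_pos (ν : ℝ) (hν : 0 ≤ ν) : ∃ δ > 0, ∀ z, 0 < z → z < δ → 0 < besselJ ν z := by
  have hc : ContinuousAt (fun z : ℝ => bP ν ((z / 2) ^ 2)) 0 := by
    have h1 : ContinuousAt (bP ν) (((0 : ℝ) / 2) ^ 2) := (bP_hasDerivAt ν hν _).continuousAt
    exact ContinuousAt.comp (f := fun z : ℝ => (z / 2) ^ 2) h1 (by fun_prop)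
  have h0 : 0 < bP ν (((0 : ℝ) / 2) ^ 2) := by simpa using bP_zero ν hν
  have := hc.eventually (lt_mem_nhds h0)
  obtain ⟨δ, hδ, h⟩ := Metric.eventually_nhds_iff.1 this
  refine ⟨δ, hδ, fun z hz hz' => ?_⟩
  rw [bJ_eq ν z hz]
  have := h (y := z) (by rw [Real.dist_eq, sub_zero, abs_of_pos hz]; exact hz')
  positivity

lemma bJ_cont0 (ν : ℝ) (hν : 0 < ν) : besselJ ν 0 = 0 ∧ ContinuousWithinAt (besselJ ν) (Set.Ici 0) 0 := by
  have h00 : besselJ ν 0 = 0 := by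
    unfold besselJ
    refine (tsum_congr (g := fun _ => (0 : ℝ)) fun m => ?_).trans tsum_zero
    have h1 : (0 : ℝ) ≤ m := Nat.cast_nonneg m
    rw [zero_div, Real.zero_rpow (by positivity), mul_zero]
  refine ⟨h00, ?_⟩
  have h1 : ContinuousAt (bP ν) (((0 : ℝ) / 2) ^ 2) := (bP_hasDerivAt ν hν.le _).continuousAt
  have h2 : ContinuousAt (fun z : ℝ => bP ν ((z / 2) ^ 2)) 0 :=
    ContinuousAt.comp (f := fun z : ℝ => (z / 2) ^ 2) h1 (by fun_prop)
  have h3 : ContinuousAt (fun z : ℝ => (z / 2) ^ ν) 0 :=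
    ContinuousAt.rpow_const (by fun_prop) (Or.inr hν.le)
  refine (h3.mul h2).continuousWithinAt.congr ?_ ?_
  · intro z hz
    rcases eq_or_lt_of_le (Set.mem_Ici.1 hz) with h | h
    · subst h
      rw [h00, Pi.mul_apply, zero_div, Real.zero_rpow hν.ne', zero_mul]
    · exact bJ_eq ν z h
  · rw [h00, Pi.mul_apply, zero_div, Real.zero_rpow hν.ne', zero_mul]

lemma bJ_deriv_aux (ν z : ℝ) (hν : 0 ≤ ν) (hz : 0 < z) :
    HasDerivAt (besselJ ν) (ν / z * besselJ ν z - besselJ (ν + 1) z) z := by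
  have hz2 : z / 2 ≠ 0 := by positivity
  have ha : HasDerivAt (fun z : ℝ => z / 2) (1 / 2) z := (hasDerivAt_id z).div_const 2
  have hb := ha.rpow_const (p := ν) (Or.inl hz2)
  have hc : HasDerivAt (fun z : ℝ => (z / 2) ^ 2) (z / 2) z := by
    refine (ha.pow 2).congr_deriv ?_
    simp; ring
  have hd := (bP_hasDerivAt ν hν ((z / 2) ^ 2)).comp z hc
  have he := hb.mul hd
  have hf : besselJ ν =ᶠ[nhds z] fun z => (z / 2) ^ ν * bP ν ((z / 2) ^ 2) := by
    filter_upwards [lt_mem_nhds hz] with y hy using bJ_eq ν y hy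
  refine (he.congr_of_eventuallyEq hf).congr_deriv ?_
  rw [bJ_eq ν z hz, bJ_eq (ν + 1) z hz, Real.rpow_sub_one hz2, Real.rpow_add_one hz2]
  simp only [Function.comp]
  field_simp
  ring

lemma bJ_rec (ν z : ℝ) (hν : 1 ≤ ν) (hz : 0 < z) :
    besselJ (ν + 1) z = 2 * ν / z * besselJ ν z - besselJ (ν - 1) z := by
  have hz2 : z / 2 ≠ 0 := by positivity
  rw [bJ_eq ν z hz, bJ_eq (ν + 1) z hz, bJ_eq (ν - 1) z hz, bP_rec ν hν,
    Real.rpow_sub_one hz2, Real.rpow_add_one hz2]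
  field_simp
  ring

/-- For `ν ≥ 1`, the function `z ↦ J_{ν−1}(z) + J_ν(z)` has exactly one zero
in `(0, j_{ν,1})`, namely `λ⁺_{ν−1,1}`, and it satisfies `j′_{ν,1} < λ⁺_{ν−1,1} < j_{ν,1}`. -/
theorem stmt11 (ν : ℝ) (hν : 1 ≤ ν)
    (jn jpn lamp : ℕ → ℝ)
    (hjn : EnumPosZeros (besselJ ν) jn)
    (hjpn : EnumPosZeros (deriv (besselJ ν)) jpn)
    (hlamp : EnumPosZeros (fun z => besselJ (ν - 1) z + besselJ ν z) lamp) :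
    lamp 1 ∈ Set.Ioo (0 : ℝ) (jn 1) ∧
    (∀ z ∈ Set.Ioo (0 : ℝ) (jn 1), besselJ (ν - 1) z + besselJ ν z = 0 → z = lamp 1) ∧
    jpn 1 < lamp 1 ∧ lamp 1 < jn 1 := by
  have hfirst : ∀ (F : ℝ → ℝ) (x : ℕ → ℝ), EnumPosZeros F x → ∀ z, 0 < z → F z = 0 → x 1 ≤ z := by
    rintro F x ⟨h1, _, h3⟩ z hz hF
    obtain ⟨k, hk, rfl⟩ := h3 z hz hF
    exact h1.monotoneOn (Set.mem_Ici.2 le_rfl) (Set.mem_Ici.2 hk) hk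
  have hg' : ∀ z, 0 < z → HasDerivAt (besselJ ν) (besselJ (ν - 1) z - ν / z * besselJ ν z) z := by
    intro z hz
    refine (bJ_deriv_aux ν z (by linarith) hz).congr_deriv ?_
    rw [bJ_rec ν z hν hz]; ring
  have hf' : ∀ z, 0 < z → HasDerivAt (besselJ (ν - 1))
      ((ν - 1) / z * besselJ (ν - 1) z - besselJ ν z) z := by
    intro z hz
    refine (bJ_deriv_aux (ν - 1) z (by linarith) hz).congr_deriv ?_
    rw [sub_add_cancel]
  obtain ⟨δ1, hδ1, hfp⟩ := bJ_pos (ν - 1) (by linarith)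
  obtain ⟨δ2, hδ2, hgp⟩ := bJ_pos ν (by linarith)
  obtain ⟨hg0, hgc0⟩ := bJ_cont0 ν (by linarith)
  generalize besselJ ν = g at *
  generalize besselJ (ν - 1) = f at *
  obtain ⟨hj0, hgj⟩ := hjn.2.1 1 le_rfl
  have hjmin := hfirst _ _ hjn
  have hlmin := hfirst _ _ hlamp
  have hpmin := hfirst _ _ hjpn
  have hl := hlamp.2.1 1 le_rfl
  set j := jn 1 with hj
  have hgc : ∀ z, 0 < z → ContinuousAt g z := fun z hz => (hg' z hz).continuousAt
  have hfc : ∀ z, 0 < z → ContinuousAt f z := fun z hz => (hf' z hz).continuousAt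
  -- positivity of g
  have hgpos : ∀ z, 0 < z → z < j → 0 < g z := by
    intro z hz hzj
    by_contra hneg
    push Not at hneg
    set w := min z (δ2 / 2) with hw
    have hw0 : 0 < w := lt_min hz (by linarith)
    have hgw := hgp w hw0 (lt_of_le_of_lt (min_le_right _ _) (by linarith))
    have hwz : w ≤ z := min_le_left _ _
    obtain ⟨c, hc, hc0⟩ := intermediate_value_Icc' hwz
      (fun y hy => (hgc y (lt_of_lt_of_le hw0 hy.1)).continuousWithinAt) (show (0:ℝ) ∈ Set.Icc _ _ from ⟨hneg, hgw.le⟩)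
    have := hjmin c (lt_of_lt_of_le hw0 hc.1) hc0
    linarith [hc.2]
  have hfj : f j < 0 := by
    have hle : f j ≤ 0 := by
      have hd := hg' j hj0
      rw [hgj, mul_zero, sub_zero] at hd
      by_contra hpos
      push Not at hpos
      have h1 := (hasDerivAt_iff_tendsto_slope.1 hd).eventually (lt_mem_nhds hpos)
      have h2 : ∀ᶠ y in nhdsWithin j (Set.Iio j), 0 < slope g j y :=
        h1.filter_mono (nhdsWithin_mono _ (fun y hy => ne_of_lt hy))
      have h3 : ∀ᶠ y in nhdsWithin j (Set.Iio j), 0 < y :=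
        (lt_mem_nhds hj0).filter_mono nhdsWithin_le_nhds
      obtain ⟨y, hy1, hy2, hy3⟩ := (h2.and (h3.and self_mem_nhdsWithin)).exists
      have hy3' : y < j := hy3
      rw [slope_def_field, hgj, sub_zero] at hy1
      have := div_neg_of_pos_of_neg (hgpos y hy2 hy3') (sub_neg.2 hy3')
      linarith
    refine lt_of_le_of_ne hle fun h0 => ?_
    -- energy
    have hE : ∀ z, 0 < z → HasDerivAt (fun z => z ^ (2 * ν) * (f z ^ 2 + g z ^ 2))
        (z ^ (2 * ν) / z * ((4 * ν - 2) * f z ^ 2)) z := by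
      intro z hz
      have h1 := (hasDerivAt_id z).rpow_const (p := 2 * ν) (Or.inl hz.ne')
      have h2 := ((hf' z hz).pow 2).add ((hg' z hz).pow 2)
      refine (h1.mul h2).congr_deriv ?_
      simp only [id, Pi.add_apply, Pi.pow_apply]
      rw [Real.rpow_sub_one hz.ne']
      field_simp
      push_cast
      ring
    have hmono : MonotoneOn (fun z => z ^ (2 * ν) * (f z ^ 2 + g z ^ 2)) (Set.Ioi 0) := by
      refine monotoneOn_of_deriv_nonneg (convex_Ioi 0)
        (fun z hz => (hE z hz).continuousAt.continuousWithinAt) ?_ ?_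
      · intro z hz
        rw [interior_Ioi] at hz
        exact (hE z hz).differentiableAt.differentiableWithinAt
      · intro z hz
        rw [interior_Ioi] at hz
        have hz' : 0 < z := hz
        rw [(hE z hz).deriv]
        have : 0 ≤ 4 * ν - 2 := by linarith
        positivity
    have h3 := hmono (show (j / 2) ∈ Set.Ioi 0 from half_pos hj0) (show j ∈ Set.Ioi 0 from hj0)
      (by linarith)
    simp only [hgj, h0] at h3
    have h4 := hgpos (j / 2) (half_pos hj0) (by linarith)
    have h5 : 0 < (j / 2) ^ (2 * ν) := Real.rpow_pos_of_pos (half_pos hj0) _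
    have : 0 < (j / 2) ^ (2 * ν) * (f (j / 2) ^ 2 + g (j / 2) ^ 2) := by positivity
    norm_num at h3
    linarith
  have hlj : lamp 1 < j := by
    set w := min (j / 2) (δ1 / 2) with hw
    have hw0 : 0 < w := lt_min (by linarith) (by linarith)
    have hwj : w < j := lt_of_le_of_lt (min_le_left _ _) (by linarith)
    have hfw := hfp w hw0 (lt_of_le_of_lt (min_le_right _ _) (by linarith))
    have hgw := hgpos w hw0 hwj
    obtain ⟨c, hc, hc0⟩ := intermediate_value_Ioo' (f := fun z => f z + g z) hwj.le
      (fun y hy => ((hfc y (lt_of_lt_of_le hw0 hy.1)).add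
        (hgc y (lt_of_lt_of_le hw0 hy.1))).continuousWithinAt)
      (show (0:ℝ) ∈ _ from ⟨by simp only [hgj]; linarith, by linarith⟩)
    exact lt_of_le_of_lt (hlmin c (lt_trans hw0 hc.1) hc0) hc.2
  obtain ⟨hl0, hlz⟩ := hl
  simp only [] at hlz
  refine ⟨⟨hl0, hlj⟩, ?_, ?_, hlj⟩
  · have hK : ∀ z, 0 < z → HasDerivAt (fun z => (z ^ (-(ν - 1)) * Real.exp (-z)) * (f z + g z))
        (-((z ^ (-(ν - 1)) * Real.exp (-z)) * (((2 * ν - 1) / z + 2) * g z))) z := by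
      intro z hz
      have h1 := (hasDerivAt_id z).rpow_const (p := -(ν - 1)) (Or.inl hz.ne')
      have h2 := (hasDerivAt_id z).neg.exp
      have h3 := (hf' z hz).add (hg' z hz)
      refine ((h1.mul h2).mul h3).congr_deriv ?_
      simp only [id, Pi.add_apply, Pi.mul_apply, Pi.neg_apply]
      rw [Real.rpow_sub_one hz.ne']
      field_simp
      ring
    have hanti : StrictAntiOn (fun z => (z ^ (-(ν - 1)) * Real.exp (-z)) * (f z + g z))
        (Set.Ioo 0 j) := by
      refine strictAntiOn_of_deriv_neg (convex_Ioo 0 j)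
        (fun z hz => (hK z hz.1).continuousAt.continuousWithinAt) ?_
      intro z hz
      rw [interior_Ioo] at hz
      rw [(hK z hz.1).deriv]
      have h1 := hz.1
      have h2 := hgpos z hz.1 hz.2
      have h3 : 0 < 2 * ν - 1 := by linarith
      have h4 : 0 < z ^ (-(ν - 1)) := Real.rpow_pos_of_pos h1 _
      rw [neg_lt_zero]
      positivity
    intro z hz hz0
    refine hanti.injOn hz ⟨hl0, hlj⟩ ?_
    simp only [hz0, hlz, mul_zero]
  · set l := lamp 1 with hll
    have hgl := hgpos l hl0 hlj
    obtain ⟨c, hc, hcd⟩ := exists_deriv_eq_slope g hl0 (by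
      intro y hy
      rcases eq_or_lt_of_le hy.1 with h | h
      · subst h
        exact hgc0.mono Set.Icc_subset_Ici_self
      · exact (hgc y h).continuousWithinAt)
      (fun y hy => (hg' y hy.1).differentiableAt.differentiableWithinAt)
    rw [hg0, sub_zero, sub_zero, (hg' c hc.1).deriv] at hcd
    have hcpos : 0 < f c - ν / c * g c := by rw [hcd]; positivity
    have hlneg : f l - ν / l * g l < 0 := by
      have h1 : 0 < ν / l * g l := by
        have : 0 < ν := by linarith
        positivity
      linarith
    obtain ⟨d, hd, hd0⟩ := intermediate_value_Ioo' (f := fun z => f z - ν / z * g z) hc.2.le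
      (fun y hy => by
        have hy0 : 0 < y := lt_of_lt_of_le hc.1 hy.1
        exact ((hfc y hy0).sub ((continuousAt_const.div continuousAt_id hy0.ne').mul
          (hgc y hy0))).continuousWithinAt)
      (show (0:ℝ) ∈ _ from ⟨hlneg, hcpos⟩)
    have hd1 : 0 < d := lt_trans hc.1 hd.1
    exact lt_of_le_of_lt (hpmin d hd1 (by rw [(hg' d hd1).deriv]; exact hd0)) hd.2
end
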